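/- Almost all multipartite pure states are nearly maximally entangled with respect to the geometric measure: let N ≥ 3, let d_1, …, d_N ≥ 2, set H = ⊗_{j=1}^N ℂ^{d_j}, d_T = ∏_{j=1}^N d_j and d_S = Σ_{j=1}^N d_j, and let μ be the unitarily invariant (uniform) Borel probability measure on the unit sphere of H. Then μ{ ψ : Λ²(|ψ⟩⟨ψ|) ≥ (9 d_S ln d_T)/(2 d_T) } < d_T^{−d_S}; equivalently, the fraction of unit vectors ψ whose geometric measure G(|ψ⟩⟨ψ|) is at most log₂ d_T − log₂(d_S ln d_T) − log₂(9/2) is less than d_T^{−d_S} (here ln denotes the natural logarithm). -/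

import Mathlib

open scoped BigOperators InnerProductSpace

namespace Paper

/-- The Borel σ-algebra on a complex Euclidean space. -/
noncomputable instance euclideanComplexMeasurableSpace {ι : Type*} [Fintype ι] :
    MeasurableSpace (EuclideanSpace ℂ ι) := borel _

/-- The map induced on the unit sphere by a ℂ-linear isometry (a unitary). -/
noncomputable def sphereMap {E : Type*} [NormedAddCommGroup E] [NormedSpace ℂ E]
    (U : E ≃ₗᵢ[ℂ] E) : Metric.sphere (0 : E) 1 → Metric.sphere (0 : E) 1 :=
  fun ψ => ⟨U ψ, by
    have h : ‖(ψ : E)‖ = 1 := mem_sphere_zero_iff_norm.mp ψ.2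
    simp [mem_sphere_zero_iff_norm, U.norm_map, h]⟩

/-- `a` is an ℓ²-normalized (unit) vector. -/
def IsUnitVec {n : Type*} [Fintype n] (a : n → ℂ) : Prop :=
  ∑ x, ‖a x‖ ^ 2 = 1

/-- The product vector a_1 ⊗ ⋯ ⊗ a_N. -/
def prodVec {N : ℕ} {ι : Fin N → Type*} (a : ∀ j, ι j → ℂ) : (∀ j, ι j) → ℂ :=
  fun i => ∏ j, a j (i j)

/-- Λ²(|ψ⟩⟨ψ|) for a pure state ψ: the maximal squared overlap |⟨φ,ψ⟩|² with unit
product vectors φ. -/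
noncomputable def pureMaxOverlap {N : ℕ} {d : Fin N → ℕ} (ψ : (∀ j, Fin (d j)) → ℂ) : ℝ :=
  sSup {r : ℝ | ∃ a : ∀ j, Fin (d j) → ℂ, (∀ j, IsUnitVec (a j)) ∧
    r = ‖∑ i, starRingEnd ℂ (prodVec a i) * ψ i‖ ^ 2}

/-!
Expand `⟪φ, ψ⟫ ^ k` by the multinomial theorem. Invariance of `μ` under diagonal unitaries makes
the monomials `ψ ^ α` of degree `k` orthogonal. Since all unitaries act transitively on the sphere,
the mean of `‖⟪φ, ψ⟫‖ ^ (2 * k)` is a constant multiple of `‖φ‖ ^ (2 * k)`; comparing coefficients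
of these polynomials in the `‖φ i‖ ^ 2` determines the second moment of every monomial.

For a product vector `φ`, the value `φ ^ α` depends only on the marginals of `α`. Grouping the
expansion by marginals and applying Cauchy-Schwarz bounds `‖⟪φ, ψ⟫‖ ^ (2 * k)` uniformly in `φ` by a
function of `ψ` whose mean is at most `∏ j, multichoose (d j) k / multichoose (∏ j, d j) k`, so
Markov's inequality controls the tail of the maximal overlap without any net over the product
vectors. The degree `k` is then chosen close to `9 / 2 * d_S * log d_T`.
-/

section MultiPow

variable {ι : Type*} [Fintype ι]

/-- The monomial `v ^ α = ∏ i, v i ^ α i` with exponent `α`, evaluated at `v`. -/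
def multiPow {R : Type*} [CommMonoid R] (v : ι → R) (α : ι → ℕ) : R :=
  ∏ i, v i ^ α i

lemma map_multiPow {R S F : Type*} [CommMonoid R] [CommMonoid S] [FunLike F R S]
    [MonoidHomClass F R S] (f : F) (v : ι → R) (α : ι → ℕ) :
    f (multiPow v α) = multiPow (fun i => f (v i)) α := by
  simp only [multiPow, map_prod, map_pow]

lemma norm_multiPow {R : Type*} [NormedField R] (v : ι → R) (α : ι → ℕ) :
    ‖multiPow v α‖ = multiPow (fun i => ‖v i‖) α := by
  simp only [multiPow, norm_prod, norm_pow]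

lemma multiPow_mul {R : Type*} [CommMonoid R] (u v : ι → R) (α : ι → ℕ) :
    multiPow (fun i => u i * v i) α = multiPow u α * multiPow v α := by
  simp only [multiPow, mul_pow, Finset.prod_mul_distrib]

lemma multiPow_pow {R : Type*} [CommMonoid R] (v : ι → R) (α : ι → ℕ) (n : ℕ) :
    multiPow (fun i => v i ^ n) α = multiPow v α ^ n := by
  simp only [multiPow, ← Finset.prod_pow, ← pow_mul, mul_comm n]

@[fun_prop]
lemma continuous_multiPow {R : Type*} [CommMonoid R] [TopologicalSpace R] [ContinuousMul R]
    (α : ι → ℕ) : Continuous fun v : ι → R => multiPow v α := by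
  unfold multiPow
  fun_prop

lemma eq_of_sum_mul_multiPow_eq {R : Type*} [CommRing R] [IsDomain R] {T : Set R} (hT : T.Infinite)
    (s : Finset (ι → ℕ)) {a b : (ι → ℕ) → R}
    (h : ∀ y : ι → R, (∀ i, y i ∈ T) →
      ∑ α ∈ s, a α * multiPow y α = ∑ α ∈ s, b α * multiPow y α)
    {α : ι → ℕ} (hα : α ∈ s) : a α = b α := by
  classical
  let toPoly (c : (ι → ℕ) → R) : MvPolynomial ι R :=
    ∑ α ∈ s, MvPolynomial.monomial (Finsupp.equivFunOnFinite.symm α) (c α)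
  have eval_toPoly (c : (ι → ℕ) → R) (y : ι → R) :
      MvPolynomial.eval y (toPoly c) = ∑ α ∈ s, c α * multiPow y α := by
    simp [toPoly, multiPow, MvPolynomial.eval_monomial, Finsupp.prod_fintype]
  have coeff_toPoly (c : (ι → ℕ) → R) :
      (toPoly c).coeff (Finsupp.equivFunOnFinite.symm α) = c α := by
    simp [toPoly, MvPolynomial.coeff_sum, MvPolynomial.coeff_monomial, hα]
  have hab : toPoly a = toPoly b := by
    refine MvPolynomial.funext_set (fun _ => T) (fun _ => hT) fun y hy => ?_
    rw [eval_toPoly, eval_toPoly, h y fun i => hy i (Set.mem_univ i)]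
  rw [← coeff_toPoly a, hab, coeff_toPoly]

variable [DecidableEq ι]

lemma sum_pow_eq_sum_multinomial_mul_multiPow {R : Type*} [CommSemiring R] (v : ι → R) (k : ℕ) :
    (∑ i, v i) ^ k =
      ∑ α ∈ Finset.univ.piAntidiag k, (Nat.multinomial Finset.univ α : R) * multiPow v α :=
  Finset.sum_pow_eq_sum_piAntidiag _ _ _

lemma card_piAntidiag_univ (k : ℕ) :
    (Finset.univ.piAntidiag k : Finset (ι → ℕ)).card = (Fintype.card ι).multichoose k := by
  rw [← Finset.map_sym_eq_piAntidiag, Finset.card_map, Finset.sym_univ, Finset.card_univ,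
    Sym.card_sym_eq_multichoose]

end MultiPow

section Counting

lemma multichoose_le_add_one_pow (n k : ℕ) : n.multichoose k ≤ (k + 1) ^ n := by
  have hsub : Finset.univ.piAntidiag k ⊆
      Fintype.piFinset fun _ : Fin n => Finset.range (k + 1) := by
    intro α hα
    have hsum : ∑ i, α i = k := (Finset.mem_piAntidiag.mp hα).1
    refine Fintype.mem_piFinset.mpr fun i => Finset.mem_range_succ_iff.mpr ?_
    exact hsum ▸ Finset.single_le_sum (fun _ _ => Nat.zero_le _) (Finset.mem_univ i)
  simpa [card_piAntidiag_univ] using Finset.card_le_card hsub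

lemma pow_le_factorial_mul_multichoose (n k : ℕ) : n ^ k ≤ k.factorial * n.multichoose k := by
  rw [Nat.multichoose_eq, ← Nat.ascFactorial_eq_factorial_mul_choose']
  exact Nat.pow_succ_le_ascFactorial n k

lemma two_pow_mul_factorial_le_add_one_pow (k : ℕ) : 2 ^ k * k.factorial ≤ (k + 1) ^ k := by
  induction k with
  | zero => simp
  | succ k ih =>
    have bernoulli : 2 * (k + 1) ^ (k + 1) ≤ (k + 2) ^ (k + 1) := by
      have := pow_add_mul_le_add_pow_of_sq_nonneg (a := k + 1) (b := 1) (Nat.zero_le _)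
        (Nat.zero_le _) (Nat.zero_le _) (Nat.zero_le _) (k + 1)
      simp only [Nat.cast_id, Nat.add_sub_cancel, mul_one] at this
      calc 2 * (k + 1) ^ (k + 1) = (k + 1) ^ (k + 1) + (k + 1) * (k + 1) ^ k := by ring
        _ ≤ (k + 2) ^ (k + 1) := this
    calc 2 ^ (k + 1) * (k + 1).factorial = 2 * (k + 1) * (2 ^ k * k.factorial) := by
          rw [Nat.factorial_succ]; ring
      _ ≤ 2 * (k + 1) * (k + 1) ^ k := by gcongr
      _ = 2 * (k + 1) ^ (k + 1) := by ring
      _ ≤ (k + 2) ^ (k + 1) := bernoulli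

lemma sq_pow_lt_two_pow_of_lt_add_two {D : ℝ} {S k : ℕ} (hD : 4 ≤ D) (hS : 2 ≤ S)
    (hk : 9 / 2 * S * Real.log D < k + 2) : (D ^ S) ^ 2 < 2 ^ k := by
  have log_two_lt : 0.69 < Real.log 2 := Real.log_two_gt_d9.trans' (by norm_num)
  have log_four_le : 2 * Real.log 2 ≤ Real.log D := by
    calc 2 * Real.log 2 = Real.log (2 ^ 2) := by rw [Real.log_pow]; norm_num
      _ ≤ Real.log D := Real.log_le_log (by norm_num) (by linarith)
  have two_mul_log_le : 2 * Real.log D ≤ S * Real.log D :=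
    mul_le_mul_of_nonneg_right (by exact_mod_cast hS) (by linarith)
  rw [← pow_mul, ← Real.log_lt_log_iff (by positivity) (by positivity), Real.log_pow, Real.log_pow]
  push_cast
  calc S * 2 * Real.log D < (9 / 2 * S * Real.log D - 2) * 0.69 := by linarith
    _ ≤ k * 0.69 := by gcongr; linarith
    _ ≤ k * Real.log 2 := by gcongr

lemma exists_factorial_mul_pow_lt {D : ℝ} {S : ℕ} (hD : 2 ≤ D) (hS : 2 ≤ S)
    (hSD : 9 / 2 * S * Real.log D ≤ D) :
    ∃ k : ℕ, k ≠ 0 ∧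
      k.factorial * (k + 1 : ℝ) ^ S * D ^ S < (9 / 2 * S * Real.log D) ^ k := by
  set x : ℝ := 9 / 2 * S * Real.log D with hx
  have four_le : 4 ≤ x := by
    have log_lower : 0.5 ≤ Real.log D :=
      (Real.log_two_gt_d9.le.trans' (by norm_num)).trans (Real.log_le_log two_pos hD)
    calc (4 : ℝ) ≤ 9 / 2 * 2 * 0.5 := by norm_num
      _ ≤ x := by rw [hx]; gcongr; exact_mod_cast hS
  have floor_le := Nat.floor_le (show 0 ≤ x by linarith)
  have lt_floor := Nat.lt_floor_add_one x
  have four_le_floor : 4 ≤ ⌊x⌋₊ := Nat.le_floor four_le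
  obtain ⟨k, hk⟩ : ∃ k : ℕ, ⌊x⌋₊ = k + 1 := Nat.exists_eq_add_of_le' (by omega)
  rw [hk] at floor_le lt_floor four_le_floor
  push_cast at floor_le lt_floor
  -- `(k + 1) ^ S ≤ D ^ S`, while `k! / x ^ k ≤ 2 ^ (-k)` because `x` is at least `k + 1`.
  refine ⟨k, by omega, ?_⟩
  calc k.factorial * (k + 1 : ℝ) ^ S * D ^ S
      ≤ k.factorial * D ^ S * D ^ S := by gcongr; linarith
    _ = (D ^ S) ^ 2 * k.factorial := by ring
    _ < 2 ^ k * k.factorial := by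
        gcongr
        exact sq_pow_lt_two_pow_of_lt_add_two (by linarith) hS (by linarith)
    _ ≤ (k + 1) ^ k := by exact_mod_cast two_pow_mul_factorial_le_add_one_pow k
    _ ≤ x ^ k := by gcongr

lemma two_le_sum_of_one_lt_prod {J : Type*} [Fintype J] {d : J → ℕ} (hd : 1 < ∏ j, d j) :
    2 ≤ ∑ j, d j := by
  by_contra! hsum
  refine hd.not_ge (Finset.prod_le_one' fun j hj => ?_)
  exact (Finset.single_le_sum (fun _ _ => Nat.zero_le _) hj).trans (Nat.le_of_lt_succ hsum)

lemma one_lt_prod_of_two_le {J : Type*} [Fintype J] [Nonempty J] {d : J → ℕ}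
    (hd : ∀ j, 2 ≤ d j) : 1 < ∏ j, d j := by
  calc 1 < 2 ^ Fintype.card J := Nat.one_lt_two_pow Fintype.card_ne_zero
    _ ≤ ∏ j, d j := by
        simpa using Finset.prod_le_prod' (s := Finset.univ) fun j _ => hd j

end Counting

section UnitarilyInvariant

open MeasureTheory
open scoped ComplexConjugate

lemma integral_norm_sum_sq_of_orthogonal {X A 𝕜 : Type*} [RCLike 𝕜] [MeasurableSpace X]
    {μ : Measure X} (s : Finset A) (g : A → X → 𝕜)
    (hint : ∀ a ∈ s, ∀ b ∈ s, Integrable (fun x => g a x * conj (g b x)) μ)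
    (horth : ∀ a ∈ s, ∀ b ∈ s, a ≠ b → ∫ x, g a x * conj (g b x) ∂μ = 0) :
    ∫ x, ‖∑ a ∈ s, g a x‖ ^ 2 ∂μ = ∑ a ∈ s, ∫ x, ‖g a x‖ ^ 2 ∂μ := by
  have key : ∫ x, (∑ a ∈ s, g a x) * conj (∑ b ∈ s, g b x) ∂μ =
      ∑ a ∈ s, ∫ x, g a x * conj (g a x) ∂μ := by
    simp_rw [map_sum, Finset.sum_mul_sum]
    rw [integral_finsetSum _ fun a ha => integrable_finsetSum _ (hint a ha)]
    refine Finset.sum_congr rfl fun a ha => ?_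
    rw [integral_finsetSum _ (hint a ha)]
    exact Finset.sum_eq_single_of_mem a ha fun b hb hba => horth a ha b hb hba.symm
  simp only [RCLike.mul_conj, ← RCLike.ofReal_pow, integral_ofReal] at key
  exact_mod_cast key

lemma exists_linearIsometryEquiv_apply_eq {𝕜 E : Type*} [RCLike 𝕜] [NormedAddCommGroup E]
    [InnerProductSpace 𝕜 E] [FiniteDimensional 𝕜 E] {u v : E} (huv : ‖u‖ = ‖v‖) :
    ∃ U : E ≃ₗᵢ[𝕜] E, U u = v := by
  rcases eq_or_ne u 0 with rfl | hu
  · exact ⟨.refl 𝕜 E, (norm_eq_zero.mp (huv ▸ norm_zero)).symm⟩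
  let coord := LinearEquiv.toSpanNonzeroSingleton 𝕜 E u hu
  let L : 𝕜 ∙ u →ₗᵢ[𝕜] E :=
    { toLinearMap := LinearMap.toSpanSingleton 𝕜 E v ∘ₗ coord.symm.toLinearMap
      norm_map' := fun x => by
        obtain ⟨c, rfl⟩ := coord.surjective x
        change ‖coord.symm (coord c) • v‖ = ‖c • u‖
        rw [coord.symm_apply_apply, norm_smul, norm_smul, huv] }
  refine ⟨L.extend.toLinearIsometryEquiv rfl, ?_⟩
  calc L.extend u = L (coord 1) := by rw [← L.extend_apply]; simp [coord]
    _ = v := by simp [L]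

/-- A measure on the unit sphere of a complex normed space that is preserved by every unitary.
The uniform distribution on pure states is the only such probability measure. -/
def IsUnitarilyInvariant {E : Type*} [NormedAddCommGroup E] [NormedSpace ℂ E] [MeasurableSpace E]
    (μ : Measure (Metric.sphere (0 : E) 1)) : Prop :=
  ∀ U : E ≃ₗᵢ[ℂ] E, μ.map (sphereMap U) = μ

instance borelSpace_euclideanComplex {ι : Type*} [Fintype ι] :
    BorelSpace (EuclideanSpace ℂ ι) := ⟨rfl⟩

lemma integrable_sphere_of_continuous {E F : Type*} [NormedAddCommGroup E] [ProperSpace E]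
    [MeasurableSpace E] [BorelSpace E] [NormedAddCommGroup F] {x : E} {r : ℝ}
    {μ : Measure (Metric.sphere x r)} [IsFiniteMeasure μ] {g : E → F} (hg : Continuous g) :
    Integrable (fun ψ : Metric.sphere x r => g ψ) μ :=
  (hg.comp continuous_subtype_val).integrable_of_hasCompactSupport (.of_compactSpace _)

lemma exists_unitary_pow_mul_conj_pow_ne_one {m n : ℕ} (hmn : m ≠ n) :
    ∃ w : unitary ℂ, (w : ℂ) ^ m * conj (w : ℂ) ^ n ≠ 1 := by
  have hroot := Complex.isPrimitiveRoot_exp (m + n + 1) (Nat.succ_ne_zero _)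
  set ζ := Complex.exp (2 * Real.pi * Complex.I / (m + n + 1 : ℕ))
  have hζ : conj ζ * ζ = 1 := by
    rw [RCLike.conj_mul, hroot.norm'_eq_one (Nat.succ_ne_zero _)]
    simp
  refine ⟨⟨ζ, Unitary.mem_iff.mpr ⟨hζ, by rwa [mul_comm] at hζ⟩⟩, fun h => hmn ?_⟩
  refine hroot.pow_inj (by omega) (by omega) ?_
  calc ζ ^ m = ζ ^ m * (conj ζ * ζ) ^ n := by rw [hζ, one_pow, mul_one]
    _ = ζ ^ m * conj ζ ^ n * ζ ^ n := by ring
    _ = ζ ^ n := by rw [h, one_mul]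

section Coordinates

variable {ι : Type*} [Fintype ι] [DecidableEq ι]

lemma inner_pow_eq_sum_multiPow (u v : EuclideanSpace ℂ ι) (k : ℕ) :
    ⟪u, v⟫_ℂ ^ k = ∑ α ∈ Finset.univ.piAntidiag k,
      Nat.multinomial Finset.univ α * conj (multiPow u α) * multiPow v α := by
  simp only [map_multiPow, mul_assoc, ← multiPow_mul]
  rw [← sum_pow_eq_sum_multinomial_mul_multiPow]
  simp only [PiLp.inner_apply, RCLike.inner_apply']

lemma sum_multinomial_mul_norm_multiPow_sq (v : EuclideanSpace ℂ ι) (k : ℕ) :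
    ∑ α ∈ Finset.univ.piAntidiag k, (Nat.multinomial Finset.univ α : ℝ) * ‖multiPow v α‖ ^ 2 =
      ‖v‖ ^ (2 * k) := by
  simp only [norm_multiPow, ← multiPow_pow]
  rw [← sum_pow_eq_sum_multinomial_mul_multiPow, pow_mul, EuclideanSpace.norm_sq_eq]

end Coordinates

namespace IsUnitarilyInvariant

section Transitivity

variable {E : Type*} [NormedAddCommGroup E] [MeasurableSpace E] [BorelSpace E]

lemma integral_comp [NormedSpace ℂ E] {μ : Measure (Metric.sphere (0 : E) 1)}
    (hμ : IsUnitarilyInvariant μ) (U : E ≃ₗᵢ[ℂ] E) {F : Type*} [NormedAddCommGroup F]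
    [NormedSpace ℝ F] [SecondCountableTopology F] {g : E → F} (hg : Continuous g) :
    ∫ ψ, g (U ψ) ∂μ = ∫ ψ, g ψ ∂μ := by
  have hU : Continuous (sphereMap U) := (U.continuous.comp continuous_subtype_val).subtype_mk _
  have hmap := integral_map (μ := μ) hU.aemeasurable
    (hg.comp continuous_subtype_val).aestronglyMeasurable
  rw [hμ U] at hmap
  exact hmap.symm

variable [InnerProductSpace ℂ E] [FiniteDimensional ℂ E] {μ : Measure (Metric.sphere (0 : E) 1)}

lemma integral_norm_inner_pow_congr (hμ : IsUnitarilyInvariant μ) {u v : E} (huv : ‖u‖ = ‖v‖)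
    (n : ℕ) : ∫ ψ, ‖⟪u, (ψ : E)⟫_ℂ‖ ^ n ∂μ = ∫ ψ, ‖⟪v, (ψ : E)⟫_ℂ‖ ^ n ∂μ := by
  obtain ⟨U, rfl⟩ := exists_linearIsometryEquiv_apply_eq (𝕜 := ℂ) huv
  rw [← hμ.integral_comp U (g := fun ψ => ‖⟪U u, ψ⟫_ℂ‖ ^ n) (by fun_prop)]
  simp only [U.inner_map_map]

lemma exists_integral_norm_inner_pow_eq [NeZero μ] (hμ : IsUnitarilyInvariant μ) (n : ℕ) :
    ∃ c : ℝ, ∀ v : E, ∫ ψ, ‖⟪v, (ψ : E)⟫_ℂ‖ ^ n ∂μ = c * ‖v‖ ^ n := by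
  obtain ⟨u⟩ := μ.nonempty_of_neZero
  have hu : ‖(u : E)‖ = 1 := mem_sphere_zero_iff_norm.mp u.2
  refine ⟨∫ ψ, ‖⟪(u : E), (ψ : E)⟫_ℂ‖ ^ n ∂μ, fun v => ?_⟩
  have hv : ‖v‖ = ‖(‖v‖ : ℂ) • (u : E)‖ := by simp [norm_smul, hu]
  rw [hμ.integral_norm_inner_pow_congr hv]
  simp only [inner_smul_left, norm_mul, mul_pow, RCLike.norm_conj, Complex.norm_real, norm_norm]
  rw [integral_const_mul, mul_comm]

end Transitivity

section Moments

variable {ι : Type*} [Fintype ι] {μ : Measure (Metric.sphere (0 : EuclideanSpace ℂ ι) 1)}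

lemma integral_multiPow_mul_conj_eq_zero (hμ : IsUnitarilyInvariant μ) {α β : ι → ℕ}
    (hαβ : α ≠ β) : ∫ ψ, multiPow ψ.1 α * conj (multiPow ψ.1 β) ∂μ = 0 := by
  classical
  obtain ⟨i, hi⟩ := Function.ne_iff.mp hαβ
  obtain ⟨w, hw⟩ : ∃ w : unitary ℂ, (w : ℂ) ^ α i * conj (w : ℂ) ^ β i ≠ 1 :=
    exists_unitary_pow_mul_conj_pow_ne_one hi
  let z : ι → unitary ℂ := Function.update 1 i w
  have multiPow_z (γ : ι → ℕ) : multiPow (fun j => (z j : ℂ)) γ = (w : ℂ) ^ γ i := by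
    rw [multiPow, Fintype.prod_eq_single i fun j hj => by simp [z, hj]]
    simp [z]
  let U : EuclideanSpace ℂ ι ≃ₗᵢ[ℂ] EuclideanSpace ℂ ι :=
    .piLpCongrRight 2 fun j => Unitary.mulLeft ℂ ℂ (z j)
  have multiPow_U (γ : ι → ℕ) (v : EuclideanSpace ℂ ι) :
      multiPow (U v) γ = (w : ℂ) ^ γ i * multiPow v γ := by
    rw [← multiPow_z, ← multiPow_mul]
    rfl
  have factor (v : EuclideanSpace ℂ ι) : multiPow (U v) α * conj (multiPow (U v) β) =
      (w : ℂ) ^ α i * conj (w : ℂ) ^ β i * (multiPow v α * conj (multiPow v β)) := by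
    rw [multiPow_U, multiPow_U, map_mul, map_pow, mul_mul_mul_comm]
  have hint := hμ.integral_comp U (g := fun ψ => multiPow ψ α * conj (multiPow ψ β)) (by fun_prop)
  simp only [factor, integral_const_mul] at hint
  exact (mul_left_eq_self₀.mp hint).resolve_left hw

lemma integral_norm_sum_mul_multiPow_sq [IsFiniteMeasure μ] (hμ : IsUnitarilyInvariant μ)
    (s : Finset (ι → ℕ)) (a : (ι → ℕ) → ℂ) :
    ∫ ψ, ‖∑ α ∈ s, a α * multiPow ψ.1 α‖ ^ 2 ∂μ =
      ∑ α ∈ s, ‖a α‖ ^ 2 * ∫ ψ, ‖multiPow ψ.1 α‖ ^ 2 ∂μ := by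
  rw [integral_norm_sum_sq_of_orthogonal]
  · simp only [norm_mul, mul_pow, integral_const_mul]
  · intro α _ β _
    exact integrable_sphere_of_continuous (E := EuclideanSpace ℂ ι)
      (g := fun v => a α * multiPow v α * conj (a β * multiPow v β)) (by fun_prop)
  · intro α _ β _ hαβ
    have factor (v : EuclideanSpace ℂ ι) : a α * multiPow v α * conj (a β * multiPow v β) =
        a α * conj (a β) * (multiPow v α * conj (multiPow v β)) := by
      rw [map_mul, mul_mul_mul_comm]
    simp only [factor]
    rw [integral_const_mul, hμ.integral_multiPow_mul_conj_eq_zero hαβ, mul_zero]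

variable [DecidableEq ι]

lemma exists_multinomial_mul_integral_eq [IsFiniteMeasure μ] [NeZero μ]
    (hμ : IsUnitarilyInvariant μ) (k : ℕ) :
    ∃ c : ℝ, ∀ α ∈ Finset.univ.piAntidiag k,
      Nat.multinomial Finset.univ α * ∫ ψ, ‖multiPow ψ.1 α‖ ^ 2 ∂μ = c := by
  obtain ⟨c, hc⟩ := hμ.exists_integral_norm_inner_pow_eq (2 * k)
  refine ⟨c, fun α hα => ?_⟩
  have hm : (Nat.multinomial Finset.univ α : ℝ) ≠ 0 := by
    exact_mod_cast (Nat.multinomial_pos _ _).ne'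
  refine mul_left_cancel₀ hm ?_
  refine eq_of_sum_mul_multiPow_eq (Set.Ioi_infinite (0 : ℝ)) (Finset.univ.piAntidiag k)
    (a := fun α => Nat.multinomial Finset.univ α *
      (Nat.multinomial Finset.univ α * ∫ ψ, ‖multiPow ψ.1 α‖ ^ 2 ∂μ))
    (b := fun α => Nat.multinomial Finset.univ α * c) (fun y hy => ?_) hα
  let v : EuclideanSpace ℂ ι := WithLp.toLp 2 fun i => (Real.sqrt (y i) : ℂ)
  have norm_multiPow_v (α : ι → ℕ) : ‖multiPow v α‖ ^ 2 = multiPow y α := by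
    rw [norm_multiPow, ← multiPow_pow]
    congr 1
    funext i
    simp [v, Real.sq_sqrt (hy i).le]
  have hcv := hc v
  rw [← sum_multinomial_mul_norm_multiPow_sq, Finset.mul_sum] at hcv
  simp only [mul_comm 2 k, pow_mul _ k 2, ← norm_pow _ k, inner_pow_eq_sum_multiPow] at hcv
  rw [hμ.integral_norm_sum_mul_multiPow_sq] at hcv
  simp only [norm_mul, mul_pow, RCLike.norm_conj, norm_multiPow_v, Complex.norm_natCast] at hcv
  convert hcv using 2 <;> ring

lemma multinomial_mul_integral_norm_multiPow_sq [IsProbabilityMeasure μ]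
    (hμ : IsUnitarilyInvariant μ) {k : ℕ} {α : ι → ℕ} (hα : α ∈ Finset.univ.piAntidiag k) :
    Nat.multinomial Finset.univ α * ∫ ψ, ‖multiPow ψ.1 α‖ ^ 2 ∂μ =
      ((Fintype.card ι).multichoose k : ℝ)⁻¹ := by
  obtain ⟨c, hc⟩ := hμ.exists_multinomial_mul_integral_eq k
  rw [hc α hα]
  refine eq_inv_of_mul_eq_one_right ?_
  calc ((Fintype.card ι).multichoose k : ℝ) * c
      = ∑ α ∈ Finset.univ.piAntidiag k,
          Nat.multinomial Finset.univ α * ∫ ψ, ‖multiPow ψ.1 α‖ ^ 2 ∂μ := by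
        rw [Finset.sum_congr rfl hc, Finset.sum_const, card_piAntidiag_univ, nsmul_eq_mul]
    _ = ∫ ψ, ‖ψ.1‖ ^ (2 * k) ∂μ := by
        simp only [← sum_multinomial_mul_norm_multiPow_sq, ← integral_const_mul]
        exact (integral_finsetSum _ fun α _ => integrable_sphere_of_continuous
          (g := fun v : EuclideanSpace ℂ ι => Nat.multinomial Finset.univ α * ‖multiPow v α‖ ^ 2)
          (by fun_prop)).symm
    _ = 1 := by simp [mem_sphere_zero_iff_norm.mp (Subtype.prop _)]

end Moments

end IsUnitarilyInvariant

end UnitarilyInvariant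

section CoarseGraining

open MeasureTheory
open scoped ComplexConjugate

variable {ι B : Type*} [Fintype ι] [DecidableEq ι] [DecidableEq B]

/-- The total multinomial weight of the exponents of degree `k` that a labelling `π` sends to
`b`. -/
def fiberWeight (π : (ι → ℕ) → B) (k : ℕ) (b : B) : ℕ :=
  ∑ α ∈ Finset.univ.piAntidiag k with π α = b, Nat.multinomial Finset.univ α

/-- The part of the multinomial expansion of `(∑ i, v i) ^ k` over the exponents that `π` sends
to `b`. -/
def fiberSum (π : (ι → ℕ) → B) (k : ℕ) (v : ι → ℂ) (b : B) : ℂ :=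
  ∑ α ∈ Finset.univ.piAntidiag k with π α = b, Nat.multinomial Finset.univ α * multiPow v α

/-- The squared norm of the orthogonal projection of `v ^ ⊗ k` onto the symmetric tensors whose
coordinates depend only on the label, under `π`, of the exponent. -/
noncomputable def fiberProjNormSq (π : (ι → ℕ) → B) (k : ℕ) (v : ι → ℂ) : ℝ :=
  ∑ b ∈ (Finset.univ.piAntidiag k).image π, ‖fiberSum π k v b‖ ^ 2 / fiberWeight π k b

variable {π : (ι → ℕ) → B} {k : ℕ}

lemma fiberWeight_pos {b : B} (hb : b ∈ (Finset.univ.piAntidiag k).image π) :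
    0 < fiberWeight π k b := by
  obtain ⟨α, hα, hαb⟩ := Finset.mem_image.mp hb
  exact Finset.sum_pos (fun _ _ => Nat.multinomial_pos _ _) ⟨α, Finset.mem_filter.mpr ⟨hα, hαb⟩⟩

lemma fiberProjNormSq_nonneg (v : ι → ℂ) : 0 ≤ fiberProjNormSq π k v :=
  Finset.sum_nonneg fun _ _ => by positivity

lemma continuous_fiberSum (b : B) : Continuous fun v => fiberSum π k v b := by
  unfold fiberSum
  fun_prop

lemma continuous_fiberProjNormSq : Continuous (fiberProjNormSq π k) :=
  continuous_finsetSum _ fun b _ => ((continuous_fiberSum b).norm.pow 2).div_const _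

section FactorsThroughLabels

variable {u : EuclideanSpace ℂ ι} {w : B → ℂ}

lemma inner_pow_eq_sum_fiberSum
    (huw : ∀ α ∈ Finset.univ.piAntidiag k, multiPow u α = w (π α)) (v : EuclideanSpace ℂ ι) :
    ⟪u, v⟫_ℂ ^ k = ∑ b ∈ (Finset.univ.piAntidiag k).image π, conj (w b) * fiberSum π k v b := by
  rw [inner_pow_eq_sum_multiPow,
    ← Finset.sum_fiberwise_of_maps_to fun α => Finset.mem_image_of_mem π]
  refine Finset.sum_congr rfl fun b _ => ?_
  rw [fiberSum, Finset.mul_sum]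
  refine Finset.sum_congr rfl fun α hα => ?_
  obtain ⟨hαk, rfl⟩ := Finset.mem_filter.mp hα
  rw [huw α hαk]
  ring

lemma norm_pow_eq_sum_fiberWeight
    (huw : ∀ α ∈ Finset.univ.piAntidiag k, multiPow u α = w (π α)) :
    ‖u‖ ^ (2 * k) =
      ∑ b ∈ (Finset.univ.piAntidiag k).image π, fiberWeight π k b * ‖w b‖ ^ 2 := by
  rw [← sum_multinomial_mul_norm_multiPow_sq,
    ← Finset.sum_fiberwise_of_maps_to fun α => Finset.mem_image_of_mem π]
  refine Finset.sum_congr rfl fun b _ => ?_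
  rw [fiberWeight, Nat.cast_sum, Finset.sum_mul]
  refine Finset.sum_congr rfl fun α hα => ?_
  obtain ⟨hαk, rfl⟩ := Finset.mem_filter.mp hα
  rw [huw α hαk]

lemma norm_inner_pow_le_mul_fiberProjNormSq
    (huw : ∀ α ∈ Finset.univ.piAntidiag k, multiPow u α = w (π α)) (v : EuclideanSpace ℂ ι) :
    ‖⟪u, v⟫_ℂ‖ ^ (2 * k) ≤ ‖u‖ ^ (2 * k) * fiberProjNormSq π k v := by
  have cauchySchwarz : (∑ b ∈ (Finset.univ.piAntidiag k).image π, ‖w b‖ * ‖fiberSum π k v b‖) ^ 2 ≤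
      ‖u‖ ^ (2 * k) * fiberProjNormSq π k v := by
    rw [norm_pow_eq_sum_fiberWeight huw]
    refine Finset.sum_sq_le_sum_mul_sum_of_sq_le_mul _ (fun _ _ => by positivity)
      (fun _ _ => by positivity) fun b hb => le_of_eq ?_
    have : (fiberWeight π k b : ℝ) ≠ 0 := by exact_mod_cast (fiberWeight_pos hb).ne'
    field_simp
  calc ‖⟪u, v⟫_ℂ‖ ^ (2 * k) = ‖⟪u, v⟫_ℂ ^ k‖ ^ 2 := by rw [norm_pow, ← pow_mul, mul_comm]
    _ ≤ (∑ b ∈ (Finset.univ.piAntidiag k).image π, ‖w b‖ * ‖fiberSum π k v b‖) ^ 2 := by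
        rw [inner_pow_eq_sum_fiberSum huw]
        gcongr
        refine (norm_sum_le _ _).trans_eq ?_
        simp only [norm_mul, RCLike.norm_conj]
    _ ≤ ‖u‖ ^ (2 * k) * fiberProjNormSq π k v := cauchySchwarz

end FactorsThroughLabels

variable {μ : Measure (Metric.sphere (0 : EuclideanSpace ℂ ι) 1)} [IsProbabilityMeasure μ]

lemma integrable_fiberProjNormSq : Integrable (fun ψ => fiberProjNormSq π k ψ.1) μ :=
  integrable_sphere_of_continuous (E := EuclideanSpace ℂ ι)
    (continuous_fiberProjNormSq.comp (PiLp.continuous_ofLp 2 _))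

lemma IsUnitarilyInvariant.integral_norm_fiberSum_sq (hμ : IsUnitarilyInvariant μ) (b : B) :
    ∫ ψ, ‖fiberSum π k ψ.1 b‖ ^ 2 ∂μ = fiberWeight π k b / (Fintype.card ι).multichoose k := by
  simp only [fiberSum]
  rw [hμ.integral_norm_sum_mul_multiPow_sq, fiberWeight, Nat.cast_sum, Finset.sum_div]
  refine Finset.sum_congr rfl fun α hα => ?_
  rw [Complex.norm_natCast, sq, mul_assoc,
    hμ.multinomial_mul_integral_norm_multiPow_sq (Finset.mem_filter.mp hα).1, div_eq_mul_inv]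

lemma IsUnitarilyInvariant.integral_fiberProjNormSq (hμ : IsUnitarilyInvariant μ) :
    ∫ ψ, fiberProjNormSq π k ψ.1 ∂μ =
      ((Finset.univ.piAntidiag k).image π).card / (Fintype.card ι).multichoose k := by
  simp only [fiberProjNormSq]
  rw [integral_finsetSum]
  · simp only [integral_div, hμ.integral_norm_fiberSum_sq]
    rw [← mul_one_div, ← nsmul_eq_mul, ← Finset.sum_const]
    refine Finset.sum_congr rfl fun b hb => ?_
    have : (fiberWeight π k b : ℝ) ≠ 0 := by exact_mod_cast (fiberWeight_pos hb).ne'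
    field_simp
  · intro b _
    exact integrable_sphere_of_continuous (E := EuclideanSpace ℂ ι)
      (((continuous_fiberSum b).comp (PiLp.continuous_ofLp 2 _)).norm.pow 2 |>.div_const _)

lemma IsUnitarilyInvariant.mul_measureReal_fiberProjNormSq_ge_le (hμ : IsUnitarilyInvariant μ)
    (c : ℝ) :
    c * μ.real {ψ | c ≤ fiberProjNormSq π k ψ.1} ≤
      ((Finset.univ.piAntidiag k).image π).card / (Fintype.card ι).multichoose k := by
  have nonneg : 0 ≤ᵐ[μ] fun ψ => fiberProjNormSq π k ψ.1 :=
    .of_forall fun _ => fiberProjNormSq_nonneg _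
  rw [← hμ.integral_fiberProjNormSq]
  exact mul_meas_ge_le_integral_of_nonneg nonneg integrable_fiberProjNormSq c

end CoarseGraining

section ProductVectors

variable {N : ℕ} {ι : Fin N → Type*} [∀ j, Fintype (ι j)]

lemma norm_toLp_prodVec {a : ∀ j, ι j → ℂ} (ha : ∀ j, IsUnitVec (a j)) :
    ‖WithLp.toLp 2 (prodVec a)‖ = 1 := by
  rw [← sq_eq_sq₀ (norm_nonneg _) zero_le_one, EuclideanSpace.norm_sq_eq, one_pow]
  simp only [prodVec, norm_prod, ← Finset.prod_pow]
  rw [← Fintype.prod_sum fun j x => ‖a j x‖ ^ 2]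
  exact Finset.prod_eq_one fun j _ => ha j

variable [∀ j, DecidableEq (ι j)]

/-- The marginals of an exponent `α` on a product index set: `marginal α j x` is the degree of the
variable `a j x` in the monomial `multiPow (prodVec a) α`. -/
def marginal (α : (∀ j, ι j) → ℕ) (j : Fin N) (x : ι j) : ℕ :=
  ∑ i with i j = x, α i

lemma multiPow_prodVec (a : ∀ j, ι j → ℂ) (α : (∀ j, ι j) → ℕ) :
    multiPow (prodVec a) α = ∏ j, multiPow (a j) (marginal α j) := by
  simp only [multiPow, prodVec, ← Finset.prod_pow]
  rw [Finset.prod_comm]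
  refine Finset.prod_congr rfl fun j _ => ?_
  rw [← Finset.prod_fiberwise _ fun i => i j]
  refine Finset.prod_congr rfl fun x _ => ?_
  rw [marginal, ← Finset.prod_pow_eq_pow_sum]
  refine Finset.prod_congr rfl fun i hi => ?_
  rw [(Finset.mem_filter.mp hi).2]

lemma marginal_mem_piAntidiag {k : ℕ} {α : (∀ j, ι j) → ℕ} (hα : α ∈ Finset.univ.piAntidiag k)
    (j : Fin N) : marginal α j ∈ Finset.univ.piAntidiag k := by
  rw [Finset.mem_piAntidiag] at hα ⊢
  exact ⟨(Finset.sum_fiberwise _ _ _).trans hα.1, fun x _ => Finset.mem_univ x⟩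

lemma card_image_marginal_le (k : ℕ) :
    ((Finset.univ.piAntidiag k).image (marginal (ι := ι))).card ≤
      ∏ j, (Fintype.card (ι j)).multichoose k := by
  have hsub : (Finset.univ.piAntidiag k).image (marginal (ι := ι)) ⊆
      Fintype.piFinset fun _ => Finset.univ.piAntidiag k := by
    refine Finset.image_subset_iff.mpr fun α hα => ?_
    exact Fintype.mem_piFinset.mpr (marginal_mem_piAntidiag hα)
  simpa only [Fintype.card_piFinset, card_piAntidiag_univ] using Finset.card_le_card hsub

end ProductVectors

section PureMaxOverlap

variable {N : ℕ} {d : Fin N → ℕ}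

lemma pureMaxOverlap_nonneg (ψ : (∀ j, Fin (d j)) → ℂ) : 0 ≤ pureMaxOverlap ψ :=
  Real.sSup_nonneg fun _ ⟨_, _, hr⟩ => hr ▸ sq_nonneg _

lemma pureMaxOverlap_le {ψ : EuclideanSpace ℂ (∀ j, Fin (d j))} {c : ℝ} (hc : 0 ≤ c)
    (h : ∀ a : ∀ j, Fin (d j) → ℂ, (∀ j, IsUnitVec (a j)) →
      ‖⟪WithLp.toLp 2 (prodVec a), ψ⟫_ℂ‖ ^ 2 ≤ c) : pureMaxOverlap ψ ≤ c := by
  refine Real.sSup_le ?_ hc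
  rintro _ ⟨a, ha, rfl⟩
  simpa only [PiLp.inner_apply, RCLike.inner_apply'] using h a ha

lemma pureMaxOverlap_le_norm_sq (ψ : EuclideanSpace ℂ (∀ j, Fin (d j))) :
    pureMaxOverlap ψ ≤ ‖ψ‖ ^ 2 := by
  refine pureMaxOverlap_le (sq_nonneg _) fun a ha => ?_
  gcongr
  simpa only [norm_toLp_prodVec ha, one_mul] using
    norm_inner_le_norm (𝕜 := ℂ) (WithLp.toLp 2 (prodVec a)) ψ

lemma pureMaxOverlap_pow_le_fiberProjNormSq {k : ℕ} (hk : k ≠ 0)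
    (ψ : EuclideanSpace ℂ (∀ j, Fin (d j))) :
    pureMaxOverlap ψ ^ k ≤ fiberProjNormSq marginal k ψ := by
  have F_nonneg := fiberProjNormSq_nonneg (π := marginal) (k := k) ψ
  have root_nonneg := Real.rpow_nonneg F_nonneg (k : ℝ)⁻¹
  have root_pow := Real.rpow_inv_natCast_pow F_nonneg hk
  rw [← root_pow]
  refine pow_le_pow_left₀ (pureMaxOverlap_nonneg _) (pureMaxOverlap_le root_nonneg fun a ha => ?_) k
  refine (pow_le_pow_iff_left₀ (sq_nonneg _) root_nonneg hk).mp ?_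
  rw [root_pow, ← pow_mul]
  have := norm_inner_pow_le_mul_fiberProjNormSq (π := marginal) (k := k)
    (u := WithLp.toLp 2 (prodVec a)) (w := fun β => ∏ j, multiPow (a j) (β j))
    (fun α _ => multiPow_prodVec a α) ψ
  rwa [norm_toLp_prodVec ha, one_pow, one_mul] at this

variable {μ : MeasureTheory.Measure
  (Metric.sphere (0 : EuclideanSpace ℂ (∀ j, Fin (d j))) 1)} [MeasureTheory.IsProbabilityMeasure μ]

lemma IsUnitarilyInvariant.pow_mul_measureReal_pureMaxOverlap_ge_le_div
    (hμ : IsUnitarilyInvariant μ) {k : ℕ} (hk : k ≠ 0) {t : ℝ} (ht : 0 ≤ t) :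
    t ^ k * μ.real {ψ | t ≤ pureMaxOverlap ψ.1} ≤
      (∏ j, (d j).multichoose k : ℕ) / (∏ j, d j).multichoose k := by
  calc t ^ k * μ.real {ψ | t ≤ pureMaxOverlap ψ.1}
      ≤ t ^ k * μ.real {ψ | t ^ k ≤ fiberProjNormSq marginal k ψ.1} := by
        refine mul_le_mul_of_nonneg_left
          (MeasureTheory.measureReal_mono fun ψ hψ => ?_) (by positivity)
        exact (pow_le_pow_left₀ ht hψ k).trans (pureMaxOverlap_pow_le_fiberProjNormSq hk ψ.1)
    _ ≤ ((Finset.univ.piAntidiag k).image (marginal (ι := fun j => Fin (d j)))).card /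
          (Fintype.card (∀ j, Fin (d j))).multichoose k :=
        hμ.mul_measureReal_fiberProjNormSq_ge_le _
    _ ≤ (∏ j, (d j).multichoose k : ℕ) / (∏ j, d j).multichoose k := by
        have := card_image_marginal_le (ι := fun j => Fin (d j)) k
        simp only [Fintype.card_pi, Fintype.card_fin] at this ⊢
        gcongr

lemma IsUnitarilyInvariant.mul_prod_pow_mul_measureReal_pureMaxOverlap_ge_le
    (hμ : IsUnitarilyInvariant μ) {k : ℕ} (hk : k ≠ 0) {t : ℝ} (ht : 0 ≤ t) :
    (t * ∏ j, (d j : ℝ)) ^ k * μ.real {ψ | t ≤ pureMaxOverlap ψ.1} ≤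
      k.factorial * (k + 1) ^ ∑ j, d j := by
  have card_bound : ∏ j, (d j).multichoose k ≤ (k + 1) ^ ∑ j, d j := by
    rw [← Finset.prod_pow_eq_pow_sum]
    exact Finset.prod_le_prod' fun j _ => multichoose_le_add_one_pow _ _
  have dim_bound : (∏ j, (d j : ℝ)) ^ k ≤ k.factorial * (∏ j, d j).multichoose k := by
    exact_mod_cast pow_le_factorial_mul_multichoose (∏ j, d j) k
  set p := μ.real {ψ | t ≤ pureMaxOverlap ψ.1}
  calc (t * ∏ j, (d j : ℝ)) ^ k * p = (∏ j, (d j : ℝ)) ^ k * (t ^ k * p) := by ring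
    _ ≤ k.factorial * (∏ j, d j).multichoose k *
          ((∏ j, (d j).multichoose k : ℕ) / (∏ j, d j).multichoose k) :=
        mul_le_mul dim_bound (hμ.pow_mul_measureReal_pureMaxOverlap_ge_le_div hk ht) (by positivity)
          (by positivity)
    _ = k.factorial * (∏ j, (d j).multichoose k : ℕ) *
          ((∏ j, d j).multichoose k / (∏ j, d j).multichoose k) := by ring
    _ ≤ k.factorial * (∏ j, (d j).multichoose k : ℕ) :=
        mul_le_of_le_one_right (by positivity) (div_self_le_one _)
    _ ≤ k.factorial * (k + 1) ^ ∑ j, d j := by gcongr; exact_mod_cast card_bound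

lemma IsUnitarilyInvariant.measureReal_pureMaxOverlap_ge_lt (hμ : IsUnitarilyInvariant μ)
    (hd : 1 < ∏ j, d j) :
    μ.real {ψ | 9 * (∑ j, (d j : ℝ)) * Real.log (∏ j, (d j : ℝ)) / (2 * ∏ j, (d j : ℝ))
        ≤ pureMaxOverlap ψ.1} < ((∏ j, (d j : ℝ)) ^ (∑ j, d j))⁻¹ := by
  have two_le_sum := two_le_sum_of_one_lt_prod hd
  have two_le_prod : (2 : ℝ) ≤ ∏ j, (d j : ℝ) := by exact_mod_cast hd
  rw [← Nat.cast_sum]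
  set D := ∏ j, (d j : ℝ)
  set S := ∑ j, d j
  set t := 9 * S * Real.log D / (2 * D) with ht
  have log_pos : 0 < Real.log D := Real.log_pos (by linarith)
  have t_mul_D : t * D = 9 / 2 * S * Real.log D := by rw [ht]; field_simp
  rcases le_or_gt t 1 with t_le_one | one_lt_t
  · have x_le : 9 / 2 * S * Real.log D ≤ D :=
      t_mul_D ▸ mul_le_of_le_one_left (by linarith) t_le_one
    obtain ⟨k, hk, hlt⟩ := exists_factorial_mul_pow_lt two_le_prod two_le_sum x_le
    have markov := hμ.mul_prod_pow_mul_measureReal_pureMaxOverlap_ge_le hk (t := t) (by positivity)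
    rw [t_mul_D] at markov
    rw [← one_div, lt_div_iff₀ (by positivity)]
    refine lt_of_mul_lt_mul_left (a := (9 / 2 * S * Real.log D) ^ k) ?_ (by positivity)
    rw [mul_one, ← mul_assoc]
    exact (mul_le_mul_of_nonneg_right markov (by positivity)).trans_lt hlt
  · have empty : {ψ : Metric.sphere (0 : EuclideanSpace ℂ (∀ j, Fin (d j))) 1 |
        t ≤ pureMaxOverlap ψ.1} = ∅ := by
      refine Set.eq_empty_of_forall_notMem fun ψ hψ => (one_lt_t.trans_le hψ).not_ge ?_
      simpa [mem_sphere_zero_iff_norm.mp ψ.2] using pureMaxOverlap_le_norm_sq ψ.1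
    rw [empty, MeasureTheory.measureReal_empty]
    positivity

end PureMaxOverlap

theorem generic_states_nearly_maximally_entangled_general {N : ℕ} (d : Fin N → ℕ)
    (hd : 1 < ∏ j, d j)
    (μ : MeasureTheory.Measure (Metric.sphere (0 : EuclideanSpace ℂ (∀ j, Fin (d j))) 1))
    [MeasureTheory.IsProbabilityMeasure μ] (hinv : IsUnitarilyInvariant μ) :
    μ {ψ | 9 * (∑ j, (d j : ℝ)) * Real.log (∏ j, (d j : ℝ)) / (2 * ∏ j, (d j : ℝ))
        ≤ pureMaxOverlap ψ.1} < ENNReal.ofReal ((∏ j, (d j : ℝ)) ^ (∑ j, d j))⁻¹ := by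
  have hlt := hinv.measureReal_pureMaxOverlap_ge_lt hd
  rw [← MeasureTheory.ofReal_measureReal]
  exact ENNReal.ofReal_lt_ofReal_iff (MeasureTheory.measureReal_nonneg.trans_lt hlt) |>.mpr hlt

/-- **Almost all multipartite pure states are nearly maximally entangled with respect to
the geometric measure.** For N ≥ 3 parties with local dimensions d_j ≥ 2,
d_T = ∏_j d_j, d_S = Σ_j d_j, and μ the unitarily invariant Borel probability measure
on the unit sphere of ⊗_j ℂ^{d_j}, the fraction of unit vectors ψ with
Λ²(|ψ⟩⟨ψ|) ≥ (9 d_S ln d_T)/(2 d_T) — equivalently, with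
G(|ψ⟩⟨ψ|) ≤ log₂ d_T − log₂(d_S ln d_T) − log₂(9/2) — is less than d_T^{−d_S}. -/
theorem generic_states_nearly_maximally_entangled {N : ℕ} (hN : 3 ≤ N)
    (d : Fin N → ℕ) (hd : ∀ j, 2 ≤ d j)
    (μ : MeasureTheory.Measure
      (Metric.sphere (0 : EuclideanSpace ℂ (∀ j, Fin (d j))) 1))
    [MeasureTheory.IsProbabilityMeasure μ]
    (hinv : ∀ U : EuclideanSpace ℂ (∀ j, Fin (d j)) ≃ₗᵢ[ℂ] EuclideanSpace ℂ (∀ j, Fin (d j)),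
      μ.map (sphereMap U) = μ) :
    μ {ψ : Metric.sphere (0 : EuclideanSpace ℂ (∀ j, Fin (d j))) 1 |
        9 * (∑ j, (d j : ℝ)) * Real.log (∏ j, (d j : ℝ)) / (2 * ∏ j, (d j : ℝ))
          ≤ pureMaxOverlap (fun i => (ψ : EuclideanSpace ℂ (∀ j, Fin (d j))) i)}
      < ENNReal.ofReal (((∏ j, (d j : ℝ)) ^ (∑ j, d j))⁻¹) := by
  have : NeZero N := ⟨by omega⟩
  exact generic_states_nearly_maximally_entangled_general d (one_lt_prod_of_two_le hd) μ hinv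

end Paper
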